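/- Let n ≥ 1, let λ = (λ_1,…,λ_ℓ) be a partition of n, and let N ≥ 1 be a number of variables. Then, as an identity of symmetric polynomials in N variables with rational coefficients, (1/n!) · Σ_{π ∈ S_n} sgn(π) · d_λ(π) · p_{λ(π)} = e_λ, where e_λ = Π_{i=1}^ℓ e_{λ_i}. -/

import Mathlib

/-- `dPart λ π` is the number of ordered tuples `(A_1, …, A_l)` of pairwise disjoint
subsets of `{0, …, n-1}` with union everything, `|A_i| = λ_i`, and each `A_i`
invariant under the permutation `π`. -/
noncomputable def dPart {n l : ℕ} (lam : Fin l → ℕ) (π : Equiv.Perm (Fin n)) : ℕ :=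
  Nat.card {A : Fin l → Finset (Fin n) //
    (∀ i j, i ≠ j → Disjoint (A i) (A j)) ∧
    (Finset.univ.biUnion A = Finset.univ) ∧
    (∀ i, (A i).card = lam i) ∧
    (∀ i, (A i).image π = A i)}

/-- `pPerm N π = p_{λ(π)}`, the product of the power sum polynomials `p_k` in `N`
variables over the cycle lengths `k` (including fixed points) of the permutation `π`. -/
noncomputable def pPerm (N : ℕ) {n : ℕ} (π : Equiv.Perm (Fin n)) :
    MvPolynomial (Fin N) ℚ :=
  ((Equiv.Perm.partition π).parts.map (fun k => MvPolynomial.psum (Fin N) ℚ k)).prod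


open Finset Equiv

lemma aux_sign {n : ℕ} {β : Type*} [DecidableEq β] (h : Fin n → β) :
    ∑ π : Perm (Fin n) with h ∘ (π : Perm (Fin n)) = h, ((Perm.sign π : ℤ) : ℚ) =
      if Function.Injective h then 1 else 0 := by
  split_ifs with hi
  · have : (univ.filter fun π : Perm (Fin n) => h ∘ π = h) = {1} := by
      ext π
      simp only [mem_filter, mem_univ, true_and, mem_singleton]
      constructor
      · intro e
        ext x
        have := hi (congrFun e x)
        simp [this]
      · rintro rfl
        rfl
    rw [this]
    simp
  · simp only [Function.Injective, not_forall] at hi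
    obtain ⟨a, b, hab, hne⟩ := hi
    refine Finset.sum_involution (fun π _ => swap a b * π) ?_ ?_ ?_ ?_
    · intro π _
      simp [Perm.sign_swap hne]
    · intro π _ _ e
      exact hne (swap_eq_one_iff.mp (mul_eq_right.mp e))
    · intro π hπ
      simp only [mem_filter, mem_univ, true_and] at hπ ⊢
      have hs : h ∘ (swap a b) = h := by
        funext x
        simp only [Function.comp, swap_apply_def]
        split_ifs with h1 h2
        · rw [h1, hab]
        · rw [h2, hab]
        · rfl
      rw [Perm.coe_mul, ← Function.comp_assoc, hs, hπ]
    · intro π _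
      simp [← mul_assoc]

lemma aux_dPart {n l : ℕ} (lam : Fin l → ℕ) (π : Perm (Fin n)) :
    dPart lam π = #{c : Fin n → Fin l | (∀ i, #{x | c x = i} = lam i) ∧ c ∘ π = c} := by
  classical
  rw [← Fintype.card_subtype, ← Nat.card_eq_fintype_card]
  unfold dPart
  symm
  refine Nat.card_eq_of_bijective (fun c => ⟨fun i => {x | c.1 x = i}, ?_, ?_, ?_, ?_⟩) ⟨?_, ?_⟩
  · intro i j hij
    rw [Finset.disjoint_left]
    intro x hx hx'
    simp at hx hx'
    exact hij (hx.symm.trans hx')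
  · ext x
    simp
  · exact c.2.1
  · intro i
    apply Finset.eq_of_subset_of_card_le
    · intro y hy
      simp only [mem_image, mem_filter, mem_univ, true_and] at hy ⊢
      obtain ⟨x, hx, rfl⟩ := hy
      rw [← hx]
      exact congrFun c.2.2 x
    · rw [card_image_of_injective _ π.injective]
  · intro c c' h
    apply Subtype.ext
    funext x
    have h1 := congrArg (fun A => A.1 (c.1 x)) h
    have : x ∈ (univ.filter fun y => c.1 y = c.1 x) := by simp
    simp only at h1
    rw [h1] at this
    exact (mem_filter.mp this).2.symm
  · rintro ⟨A, hd, hu, hc, hπ⟩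
    have hex : ∀ x, ∃ i, x ∈ A i := by
      intro x
      have : x ∈ univ.biUnion A := by rw [hu]; simp
      simpa using this
    choose c hcA using hex
    have huniq : ∀ x i, x ∈ A i ↔ c x = i := by
      intro x i
      constructor
      · intro hx
        by_contra hne
        exact Finset.disjoint_left.mp (hd _ _ hne) (hcA x) hx
      · rintro rfl
        exact hcA x
    have hA : (fun i => univ.filter fun x => c x = i) = A := by
      funext i
      ext x
      simp [huniq]
    refine ⟨⟨c, ?_, ?_⟩, ?_⟩
    · intro i
      rw [← hc i, ← hA]
    · funext x
      apply (huniq _ _).mp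
      have : π x ∈ (A (c x)).image π := mem_image_of_mem _ (hcA x)
      rwa [hπ] at this
    · apply Subtype.ext
      exact hA

lemma aux_count {n l : ℕ} (lam : Fin l → ℕ) (hs : ∑ i, lam i = n) :
    #{c : Fin n → Fin l | ∀ i, #{x | c x = i} = lam i} * ∏ i, (lam i).factorial
      = n.factorial := by
  classical
  have e : Fin n ≃ Σ i, Fin (lam i) := Fintype.equivOfCardEq (by simp [hs])
  set c0 : Fin n → Fin l := fun x => (e x).1 with hc0
  have hc0' : ∀ i, Fintype.card {x // c0 x = i} = lam i := by
    intro i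
    have : {x // c0 x = i} ≃ Fin (lam i) :=
      (e.subtypeEquiv (q := fun y => y.1 = i) (fun x => Iff.rfl)).trans (Equiv.sigmaSubtype i)
    simpa using Fintype.card_congr this
  have h0 : #{g : Perm (Fin n) | c0 ∘ g = c0} = ∏ i, (lam i).factorial := by
    rw [← Fintype.card_subtype, DomMulAct.stabilizer_card]
    simp [hc0']
  have h1 := Finset.card_eq_sum_card_fiberwise (s := (univ : Finset (Perm (Fin n))))
    (t := {c : Fin n → Fin l | ∀ i, #{x | c x = i} = lam i}) (f := fun σ : Perm (Fin n) => c0 ∘ σ) (by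
      intro σ _
      simp only [coe_filter, mem_univ, true_and, Set.mem_ofPred_eq]
      intro i
      rw [← hc0' i, ← Fintype.card_subtype]
      exact Fintype.card_congr (σ.subtypeEquiv (fun x => Iff.rfl)))
  rw [card_univ, Fintype.card_perm, Fintype.card_fin] at h1
  rw [h1, ← smul_eq_mul, ← Finset.sum_const]
  refine Finset.sum_congr rfl fun c hc => ?_
  simp only [mem_filter, mem_univ, true_and] at hc
  have τ' : ∀ i, Nonempty ({x // c x = i} ≃ {x // c0 x = i}) := fun i => by
    refine ⟨Fintype.equivOfCardEq ?_⟩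
    rw [hc0', Fintype.card_subtype, hc]
  let τ : Perm (Fin n) := Equiv.ofFiberEquiv (fun i => (τ' i).some)
  have hτ : c0 ∘ τ = c := by
    funext x
    exact Equiv.ofFiberEquiv_map _ x
  rw [← h0]
  refine Finset.card_bij (fun g _ => g * τ) ?_ ?_ ?_
  · intro g hg
    simp only [mem_filter, mem_univ, true_and] at hg ⊢
    rw [Perm.coe_mul, ← Function.comp_assoc, hg, hτ]
  · intro a _ b _ h
    exact mul_right_cancel h
  · intro b hb
    simp only [mem_filter, mem_univ, true_and] at hb
    refine ⟨b * τ⁻¹, ?_, by simp⟩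
    simp only [mem_filter, mem_univ, true_and]
    rw [Perm.coe_mul, ← Function.comp_assoc, hb, ← hτ]
    funext x
    simp

open MvPolynomial in
lemma aux_inj {N : ℕ} {β : Type*} [Fintype β] [DecidableEq β] :
    ∑ g : β → Fin N with Function.Injective g, ∏ b, (X (g b) : MvPolynomial (Fin N) ℚ)
      = ((Fintype.card β).factorial : ℚ) • esymm (Fin N) ℚ (Fintype.card β) := by
  classical
  rw [esymm, Finset.smul_sum]
  rw [← Finset.sum_fiberwise_of_maps_to (t := powersetCard (Fintype.card β) univ)
    (g := fun g => univ.image g) (by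
      intro g hg
      simp only [mem_filter, mem_univ, true_and] at hg
      simp [mem_powersetCard, card_image_of_injective _ hg])]
  refine Finset.sum_congr rfl fun S hS => ?_
  rw [mem_powersetCard] at hS
  have : ∀ g ∈ ((univ.filter fun g : β → Fin N => Function.Injective g).filter
      fun g => univ.image g = S), ∏ b, (X (g b) : MvPolynomial (Fin N) ℚ) = ∏ i ∈ S, X i := by
    intro g hg
    simp only [mem_filter, mem_univ, true_and] at hg
    rw [← hg.2, Finset.prod_image (fun a _ b _ h => hg.1 h)]
  rw [Finset.sum_congr rfl this, Finset.sum_const, Nat.cast_smul_eq_nsmul]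
  congr 1
  have e : β ≃ S := Fintype.equivOfCardEq (by simp [hS.2])
  rw [← Fintype.card_equiv e, ← Finset.card_univ]
  symm
  refine Finset.card_bij (fun g _ b => (g b : Fin N)) ?_ ?_ ?_
  · intro g _
    simp only [mem_filter, mem_univ, true_and]
    refine ⟨fun a b h => g.injective (Subtype.ext h), ?_⟩
    ext x
    simp only [mem_image, mem_univ, true_and]
    constructor
    · rintro ⟨b, rfl⟩
      exact (g b).2
    · intro hx
      exact ⟨g.symm ⟨x, hx⟩, by simp⟩
  · intro a _ b _ h
    ext x
    exact congrArg _ (congrFun h x)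
  · intro g hg
    simp only [mem_filter, mem_univ, true_and] at hg
    have hm : ∀ b, g b ∈ S := fun b => by rw [← hg.2]; simp
    refine ⟨Equiv.ofBijective (fun b => ⟨g b, hm b⟩) ⟨fun a b h => hg.1 ?_, ?_⟩, by simp, rfl⟩
    · exact congrArg Subtype.val h
    · rintro ⟨x, hx⟩
      rw [← hg.2] at hx
      simp only [mem_image, mem_univ, true_and] at hx
      obtain ⟨b, rfl⟩ := hx
      exact ⟨b, rfl⟩

open MvPolynomial in
lemma aux_fixc {n l N : ℕ} (c : Fin n → Fin l) :
    ∑ f : Fin n → Fin N with Function.Injective (fun x => (c x, f x)),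
        ∏ x, (X (f x) : MvPolynomial (Fin N) ℚ)
      = ∏ i, (((#{x | c x = i}).factorial : ℚ) • esymm (Fin N) ℚ (#{x | c x = i})) := by
  classical
  have h : ∀ i, (((#{x | c x = i}).factorial : ℚ) • esymm (Fin N) ℚ (#{x | c x = i}))
      = ∑ g : {x // c x = i} → Fin N with Function.Injective g,
        ∏ b, (X (g b) : MvPolynomial (Fin N) ℚ) := by
    intro i
    rw [aux_inj, Fintype.card_subtype]
  simp_rw [h]
  rw [Finset.prod_univ_sum]
  symm
  refine Finset.sum_bij (fun g _ x => g (c x) ⟨x, rfl⟩) ?_ ?_ ?_ ?_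
  · intro g hg
    simp only [Fintype.mem_piFinset, mem_filter, mem_univ, true_and] at hg ⊢
    intro x y hxy
    simp only [Prod.mk.injEq] at hxy
    obtain ⟨h1, h2⟩ := hxy
    have key : ∀ i (hx : c x = i) (hy : c y = i), g i ⟨x, hx⟩ = g i ⟨y, hy⟩ → x = y := by
      intro i hx hy h
      exact congrArg Subtype.val (hg i h)
    refine key (c x) rfl h1.symm ?_
    rw [h2]
    have : ∀ i (hi : c y = i), g (c y) ⟨y, rfl⟩ = g i ⟨y, hi⟩ := by
      rintro i rfl
      rfl
    exact this _ _
  · intro a _ b _ h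
    funext i x
    obtain ⟨x, rfl⟩ := x
    exact congrFun h x
  · intro f hf
    simp only [mem_filter, mem_univ, true_and] at hf
    refine ⟨fun i x => f x, ?_, rfl⟩
    simp only [Fintype.mem_piFinset, mem_filter, mem_univ, true_and]
    intro i x y hxy
    apply Subtype.ext
    apply hf
    simp [x.2, y.2]
    exact hxy
  · intro g _
    rw [← Fintype.prod_fiberwise (g := c)]
    refine Finset.prod_congr rfl fun i _ => Finset.prod_congr rfl fun x _ => ?_
    obtain ⟨x, rfl⟩ := x
    rfl

open MvPolynomial in
lemma aux_orbit {n N : ℕ} (π : Perm (Fin n)) {J : Type*} [Fintype J] [DecidableEq J]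
    (κ : Fin n → J) (hsurj : Function.Surjective κ)
    (hκ : ∀ x y, κ x = κ y ↔ π.SameCycle x y) :
    ∑ f : Fin n → Fin N with f ∘ π = f, ∏ x, (X (f x) : MvPolynomial (Fin N) ℚ)
      = ∏ j, psum (Fin N) ℚ (#{x | κ x = j}) := by
  classical
  simp_rw [psum]
  rw [Finset.prod_univ_sum, Fintype.piFinset_univ]
  symm
  refine Finset.sum_bij (fun g _ => g ∘ κ) ?_ ?_ ?_ ?_
  · intro g _
    simp only [mem_filter, mem_univ, true_and]
    funext x
    simp only [Function.comp]
    rw [(hκ (π x) x).mpr (by simpa using Perm.SameCycle.refl π x)]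
  · intro a _ b _ h
    exact hsurj.injective_comp_right h
  · intro f hf
    simp only [mem_filter, mem_univ, true_and] at hf
    have hz : ∀ x y, π.SameCycle x y → f x = f y := by
      intro x y hxy
      obtain ⟨k, _, rfl⟩ := hxy.exists_pow_eq'
      clear * - hf
      induction k with
      | zero => simp
      | succ k ih => rw [ih, pow_succ']; exact (congrFun hf _).symm
    refine ⟨fun j => f (hsurj j).choose, mem_univ _, ?_⟩
    funext x
    exact hz _ _ ((hκ _ _).mp (hsurj (κ x)).choose_spec)
  · intro g _
    rw [← Finset.prod_fiberwise (s := univ) (g := κ)]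
    refine Finset.prod_congr rfl fun j _ => ?_
    rw [← Finset.prod_const]
    refine Finset.prod_congr rfl fun x hx => ?_
    simp at hx
    simp [hx]

open MvPolynomial in
lemma aux_pPerm {n N : ℕ} (π : Perm (Fin n)) :
    pPerm N π = ∑ f : Fin n → Fin N with f ∘ π = f,
      ∏ x, (X (f x) : MvPolynomial (Fin N) ℚ) := by
  classical
  let κ : Fin n → π.cycleFactorsFinset ⊕ {x // π x = x} := fun x =>
    if h : π x = x then Sum.inr ⟨x, h⟩ else
      Sum.inl ⟨π.cycleOf x, Perm.cycleOf_mem_cycleFactorsFinset_iff.mpr (Perm.mem_support.mpr h)⟩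
  have hl : ∀ x (d : π.cycleFactorsFinset), κ x = Sum.inl d ↔ x ∈ d.1.support := by
    rintro x ⟨d, hd⟩
    by_cases h : π x = x
    · simp only [κ, h, dif_pos]
      simp only [reduceCtorEq, false_iff]
      intro hx
      exact Perm.mem_support.mp (Perm.mem_cycleFactorsFinset_support_le hd hx) h
    · simp only [κ, h, dif_neg, not_false_eq_true, Sum.inl.injEq, Subtype.mk.injEq]
      constructor
      · rintro rfl
        rw [Perm.mem_support_cycleOf_iff]
        exact ⟨Perm.SameCycle.refl _ _, Perm.mem_support.mpr h⟩
      · intro hx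
        exact (Perm.cycle_is_cycleOf hx hd).symm
  have hr : ∀ x (y : {x // π x = x}), κ x = Sum.inr y ↔ x = y := by
    rintro x ⟨y, hy⟩
    by_cases h : π x = x
    · simp [κ, h]
    · simp only [κ, h, dif_neg, not_false_eq_true, reduceCtorEq, false_iff]
      rintro rfl
      exact h hy
  have hsurj : Function.Surjective κ := by
    rintro (d | y)
    · obtain ⟨x, hx⟩ := (Perm.mem_cycleFactorsFinset_iff.mp d.2).1.nonempty_support
      exact ⟨x, (hl _ _).mpr hx⟩
    · exact ⟨y, (hr _ _).mpr rfl⟩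
  have hκ : ∀ x y, κ x = κ y ↔ π.SameCycle x y := by
    intro x y
    by_cases h : π y = y
    · have : κ y = Sum.inr ⟨y, h⟩ := (hr _ _).mpr rfl
      rw [this, hr]
      constructor
      · rintro rfl
        exact Perm.SameCycle.refl _ _
      · intro hxy
        exact (hxy.symm.eq_of_left h).symm
    · have : κ y = Sum.inl ⟨π.cycleOf y,
          Perm.cycleOf_mem_cycleFactorsFinset_iff.mpr (Perm.mem_support.mpr h)⟩ := by
        simp [κ, h]
      rw [this, hl, Perm.mem_support_cycleOf_iff' h]
      exact ⟨fun h => h.symm, fun h => h.symm⟩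
  rw [aux_orbit π κ hsurj hκ, Fintype.prod_sum_type]
  simp_rw [hl, hr]
  unfold pPerm
  rw [Perm.parts_partition, Multiset.map_add, Multiset.prod_add, Perm.cycleType_def,
    Multiset.map_map, Multiset.map_replicate, Multiset.prod_replicate]
  congr 1
  · rw [Finset.prod_coe_sort π.cycleFactorsFinset
      (fun d => psum (Fin N) ℚ (#{x | x ∈ d.support}))]
    simp only [Finset.filter_univ_mem]
    rfl
  · have : ∀ y : {x // π x = x}, #{x | x = y.1} = 1 := fun y => by
      simp [Finset.filter_eq']
    simp only [this, Finset.prod_const]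
    congr 1
    rw [card_univ, Fintype.card_subtype, ← Finset.card_compl]
    congr 1
    ext x
    simp

theorem average_sgn_dPart_psum_eq_esymm (n : ℕ) (hn : 1 ≤ n) (l : ℕ)
    (lam : Fin l → ℕ) (ha : Antitone lam) (hp : ∀ i, 0 < lam i)
    (hs : ∑ i, lam i = n) (N : ℕ) (hN : 1 ≤ N) :
    (1 / (Nat.factorial n : ℚ)) •
      ∑ π : Equiv.Perm (Fin n),
        (((Equiv.Perm.sign π : ℤ) : ℚ) * (dPart lam π : ℚ)) • pPerm N π
      = ∏ i, MvPolynomial.esymm (Fin N) ℚ (lam i) := by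
  classical
  set P : (Fin n → Fin N) → MvPolynomial (Fin N) ℚ := fun f => ∏ x, MvPolynomial.X (f x) with hP
  set C : Finset (Fin n → Fin l) := {c : Fin n → Fin l | ∀ i, #{x | c x = i} = lam i} with hC
  have h1 : ∀ π : Perm (Fin n),
      (((Equiv.Perm.sign π : ℤ) : ℚ) * (dPart lam π : ℚ)) • pPerm N π
      = ∑ c ∈ C, ∑ f : Fin n → Fin N,
        (if (fun x => (c x, f x)) ∘ π = (fun x => (c x, f x)) then
          ((Equiv.Perm.sign π : ℤ) : ℚ) else 0) • P f := by
    intro π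
    have hiff : ∀ (c : Fin n → Fin l) (f : Fin n → Fin N),
        ((fun x => (c x, f x)) ∘ π = (fun x => (c x, f x))) ↔ (c ∘ π = c ∧ f ∘ π = f) := by
      intro c f
      simp [funext_iff, forall_and]
    rw [aux_pPerm, aux_dPart, ← Finset.filter_filter, Finset.card_filter, Nat.cast_sum,
      Finset.mul_sum, Finset.sum_smul]
    refine Finset.sum_congr rfl fun c _ => ?_
    rw [Finset.sum_filter, Finset.smul_sum]
    refine Finset.sum_congr rfl fun f _ => ?_
    simp only [hiff]
    by_cases h1 : c ∘ π = c <;> by_cases h2 : f ∘ π = f <;> simp [h1, h2, hP]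
  simp_rw [h1]
  rw [Finset.sum_comm]
  have h2 : ∀ c ∈ C, ∑ π : Perm (Fin n), ∑ f : Fin n → Fin N,
        (if (fun x => (c x, f x)) ∘ π = (fun x => (c x, f x)) then
          ((Equiv.Perm.sign π : ℤ) : ℚ) else 0) • P f
      = ((∏ i, (lam i).factorial : ℕ) : ℚ) • ∏ i, MvPolynomial.esymm (Fin N) ℚ (lam i) := by
    intro c hc
    simp only [hC, mem_filter, mem_univ, true_and] at hc
    rw [Finset.sum_comm]
    simp_rw [← Finset.sum_smul, ← Finset.sum_filter, aux_sign, ite_smul, one_smul, zero_smul]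
    rw [← Finset.sum_filter, hP, aux_fixc]
    simp_rw [hc]
    rw [Finset.prod_smul, Nat.cast_prod]
  rw [Finset.sum_congr rfl h2, Finset.sum_const, ← Nat.cast_smul_eq_nsmul ℚ, smul_smul, smul_smul]
  have h3 := aux_count lam hs
  rw [mul_assoc, ← Nat.cast_mul, h3, one_div, inv_mul_cancel₀, one_smul]
  exact_mod_cast n.factorial_ne_zero
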